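/- arXiv:1106.0196 — 3 statements merged into one kernel-verified Lean document; each statement's English description precedes it below -/
import Mathlib

section
/- Let S be a subset of Baire space ℕ^ℕ. Suppose there are families (σ_{i,j})_{i,j∈ℕ} and (τ_{i,j})_{i,j∈ℕ} of finite sequences of natural numbers such that S = ⋃_{i∈ℕ} ⋂_{j∈ℕ} [σ_{i,j}]ᶜ and S = ⋂_{i∈ℕ} ⋃_{j∈ℕ} [τ_{i,j}], where [σ] denotes the cylinder of all infinite extensions of the finite sequence σ. Then S is guessable. -/
/-!
A set given by the two forms is both `Gδ` and `Fσ` in Baire space: `S = ⋂ i, U i` and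
`Sᶜ = ⋂ i, C i` with `U i` and `C i` open. Seeing only a finite prefix of `f`, ask which of the two
sequences has the earlier term not yet known to contain `f`, that is, not containing the cylinder
of the prefix. If `f ∈ S`, then `f` misses some `C i`, whereas each of `U 0, …, U i` contains all
sufficiently long cylinders around `f`, so the answer is eventually `C`. The situation is symmetric
under exchanging `S` with `Sᶜ`, so if `f ∉ S` the answer is eventually `U`.
-/

/-- `G` guesses `S`: for every `f`, the guess `G (f 0, …, f n)` is eventually `1`
if `f ∈ S` and eventually `0` if `f ∉ S`. -/
def Guesses (G : List ℕ → ℕ) (S : Set (ℕ → ℕ)) : Prop :=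
  ∀ f : ℕ → ℕ,
    (f ∈ S → ∀ᶠ n in Filter.atTop, G (List.ofFn fun i : Fin (n + 1) => f i) = 1) ∧
    (f ∉ S → ∀ᶠ n in Filter.atTop, G (List.ofFn fun i : Fin (n + 1) => f i) = 0)

/-- `S` is guessable if some `G` guesses it. -/
def Guessable (S : Set (ℕ → ℕ)) : Prop := ∃ G : List ℕ → ℕ, Guesses G S

/-- The cylinder of a finite sequence `l`: all `f : ℕ → ℕ` extending `l`. -/
def cylinder (l : List ℕ) : Set (ℕ → ℕ) :=
  {f | ∀ i, (h : i < l.length) → f i = l.get ⟨i, h⟩}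

open Filter Topology

section EscapesBefore

variable {X ι : Type*} {C U : ι → Set X}

/-- The set `V` leaves the sequence `C` strictly before it leaves `U`: the first `i` with
`¬ V ⊆ C i` precedes the first `i` with `¬ V ⊆ U i`, if the latter exists. With `V` the set of
points compatible with a finite observation, this is the event on which the guesser answers
`f ∈ S`, where `S = ⋂ i, U i` and `Sᶜ = ⋂ i, C i`. -/
def EscapesBefore [LE ι] (C U : ι → Set X) (V : Set X) : Prop :=
  ∃ i, ¬ V ⊆ C i ∧ ∀ k ≤ i, V ⊆ U k

theorem EscapesBefore.asymm [LinearOrder ι] {V : Set X} (h : EscapesBefore C U V) :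
    ¬ EscapesBefore U C V := by
  obtain ⟨i, hCi, hU⟩ := h
  rintro ⟨k, hUk, hC⟩
  rcases le_total i k with hik | hki
  · exact hCi (hC i hik)
  · exact hUk (hU k hki)

theorem eventually_smallSets_escapesBefore [Preorder ι] [LocallyFiniteOrderBot ι] {l : Filter X}
    {x : X} {i : ι} (hU : ∀ k ≤ i, U k ∈ l) (hx : x ∉ C i) :
    ∀ᶠ V in l.smallSets, x ∈ V → EscapesBefore C U V := by
  have hsub : ∀ᶠ V in l.smallSets, ∀ k ≤ i, V ⊆ U k :=
    (Set.finite_Iic i).eventually_all.2 fun k hk => eventually_smallSets_subset.2 (hU k hk)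
  filter_upwards [hsub] with V hV hxV
  exact ⟨i, fun hVC => hx (hVC hxV), hV⟩

theorem eventually_escapesBefore_of_mem_iInter [TopologicalSpace X] [Preorder ι]
    [LocallyFiniteOrderBot ι] {α : Type*} {l : Filter α} {V : α → Set X} {x : X}
    (hUo : ∀ i, IsOpen (U i)) (hxU : x ∈ ⋂ i, U i) (hxC : x ∉ ⋂ i, C i)
    (hV : Tendsto V l (𝓝 x).smallSets) (hxV : ∀ a, x ∈ V a) :
    ∀ᶠ a in l, EscapesBefore C U (V a) := by
  obtain ⟨i, hi⟩ : ∃ i, x ∉ C i := by simpa only [Set.mem_iInter, not_forall] using hxC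
  have hU (k : ι) : U k ∈ 𝓝 x := (hUo k).mem_nhds (Set.mem_iInter.1 hxU k)
  filter_upwards [hV.eventually (eventually_smallSets_escapesBefore (fun k _ => hU k) hi)] with a ha
  exact ha (hxV a)

end EscapesBefore

theorem tendsto_cylinder_smallSets {E : ℕ → Type*} [∀ n, TopologicalSpace (E n)]
    [∀ n, DiscreteTopology (E n)] (x : ∀ n, E n) :
    Tendsto (PiNat.cylinder x) atTop (𝓝 x).smallSets := by
  refine tendsto_smallSets_iff.2 fun t ht => ?_
  obtain ⟨_, ⟨y, m, rfl⟩, hxy, hyt⟩ := (PiNat.isTopologicalBasis_cylinders E).mem_nhds_iff.1 ht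
  filter_upwards [eventually_ge_atTop m] with n hmn
  calc
    PiNat.cylinder x n ⊆ PiNat.cylinder x m := PiNat.cylinder_anti x hmn
    _ = PiNat.cylinder y m := PiNat.mem_cylinder_iff_eq.1 hxy
    _ ⊆ t := hyt

theorem cylinder_eq_piNat_cylinder (l : List ℕ) :
    cylinder l = PiNat.cylinder (fun i => l.getD i 0) l.length := by
  ext f
  simp +contextual [cylinder, PiNat.cylinder]

theorem isOpen_cylinder (l : List ℕ) : IsOpen (cylinder l) := by
  rw [cylinder_eq_piNat_cylinder]
  exact PiNat.isOpen_cylinder _ _ _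

theorem cylinder_ofFn (f : ℕ → ℕ) (n : ℕ) :
    cylinder (List.ofFn fun i : Fin n => f i) = PiNat.cylinder f n := by
  simp [cylinder, PiNat.cylinder]

open scoped Classical in
theorem guessable_of_isGδ_of_isGδ_compl {S : Set (ℕ → ℕ)} (hS : IsGδ S) (hSc : IsGδ Sᶜ) :
    Guessable S := by
  obtain ⟨U, hUo, hU⟩ := hS.eq_iInter_nat
  obtain ⟨C, hCo, hC⟩ := hSc.eq_iInter_nat
  refine ⟨fun l => if EscapesBefore C U (cylinder l) then 1 else 0, fun f => ?_⟩
  simp only [cylinder_ofFn]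
  have hV : Tendsto (fun n => PiNat.cylinder f (n + 1)) atTop (𝓝 f).smallSets :=
    (tendsto_cylinder_smallSets f).comp (tendsto_add_atTop_nat 1)
  have hfV (n : ℕ) : f ∈ PiNat.cylinder f (n + 1) := PiNat.self_mem_cylinder f _
  constructor <;> intro hf
  · have hfU : f ∈ ⋂ i, U i := hU ▸ hf
    have hfC : f ∉ ⋂ i, C i := hC ▸ not_not_intro hf
    filter_upwards [eventually_escapesBefore_of_mem_iInter hUo hfU hfC hV hfV] with n hn
    exact if_pos hn
  · have hfU : f ∉ ⋂ i, U i := hU ▸ hf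
    have hfC : f ∈ ⋂ i, C i := hC ▸ hf
    filter_upwards [eventually_escapesBefore_of_mem_iInter hCo hfC hfU hV hfV] with n hn
    exact if_neg hn.asymm

theorem isGδ_iInter_iUnion_cylinder {ι κ : Sort*} [Countable ι] (τ : ι → κ → List ℕ) :
    IsGδ (⋂ i, ⋃ j, cylinder (τ i j)) :=
  .iInter_of_isOpen fun i => isOpen_iUnion fun j => isOpen_cylinder (τ i j)

/-- If `S` is a countable union of countable intersections of complements of cylinders,
and a countable intersection of countable unions of cylinders, then `S` is guessable. -/
theorem guessable_of_cylinder_forms (S : Set (ℕ → ℕ))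
    (σ τ : ℕ → ℕ → List ℕ)
    (h₁ : S = ⋃ i, ⋂ j, (cylinder (σ i j))ᶜ)
    (h₂ : S = ⋂ i, ⋃ j, cylinder (τ i j)) :
    Guessable S := by
  have hS : IsGδ S := h₂ ▸ isGδ_iInter_iUnion_cylinder τ
  have hSc : IsGδ Sᶜ := by
    have hforms : Sᶜ = ⋂ i, ⋃ j, cylinder (σ i j) := by
      simp only [h₁, Set.compl_iUnion, Set.compl_iInter, compl_compl]
    exact hforms ▸ isGδ_iInter_iUnion_cylinder σ
  exact guessable_of_isGδ_of_isGδ_compl hS hSc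
end

section
/- Let S be a subset of Baire space ℕ^ℕ. Then S is clopen-guessable if and only if S is both Fσ (a countable union of closed sets) and Gδ (a countable intersection of open sets). (This is the m = 1 case of the paper's main theorem: the first-order guessable sets are exactly the Δ⁰₂ sets.) -/
/-- `S` is clopen-guessable: there are a sequence of clopen sets `C n` and a guesser `G`,
fed the characteristic values `χ_{C 0} f, …, χ_{C n} f`, whose guesses are eventually `1`
when `f ∈ S` and eventually `0` when `f ∉ S`. -/
def ClopenGuessable (S : Set (ℕ → ℕ)) : Prop :=
  ∃ C : ℕ → Set (ℕ → ℕ), (∀ n, IsClopen (C n)) ∧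
    ∃ G : List ℕ → ℕ, ∀ f : ℕ → ℕ,
      (f ∈ S → ∀ᶠ n in Filter.atTop,
        G (List.ofFn fun i : Fin (n + 1) => (C i).indicator (fun _ => 1) f) = 1) ∧
      (f ∉ S → ∀ᶠ n in Filter.atTop,
        G (List.ofFn fun i : Fin (n + 1) => (C i).indicator (fun _ => 1) f) = 0)

/-!
Both conditions say that the characteristic function of `S` is a pointwise limit of characteristic
functions of clopen sets `E n`. A guesser yields such sets because its `n`-th guess depends on
finitely many clopen sets; conversely, fed the sets `E n` themselves, one guesses by repeating the
last answer. From a limit, `S = ⋃ N, ⋂ n ≥ N, E n` is Fσ, and so is its complement. In the other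
direction, write `S` and `Sᶜ` as increasing unions of closed sets `A n` and `B n` and let `E n` be
a clopen set separating `A n` from `B n`.
-/

open Set Filter TopologicalSpace

/-- An ultranormal space (large inductive dimension at most zero): disjoint closed sets are
separated by a clopen set. Points are not required to be closed. -/
class UltranormalSpace (X : Type*) [TopologicalSpace X] : Prop where
  exists_isClopen_of_disjoint : ∀ ⦃A B : Set X⦄, IsClosed A → IsClosed B → Disjoint A B →
    ∃ E, IsClopen E ∧ A ⊆ E ∧ Disjoint E B

instance hasSmallInductiveDimensionLE_zero_pi {ι : Type*} {X : ι → Type*}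
    [∀ i, TopologicalSpace (X i)] [∀ i, HasSmallInductiveDimensionLE (X i) 0] :
    HasSmallInductiveDimensionLE (∀ i, X i) 0 := by
  have hbasis (i : ι) : IsTopologicalBasis {s : Set (X i) | IsClopen s} :=
    hasSmallInductiveDimensionLT_one_iff.1 (‹∀ i, HasSmallInductiveDimensionLE (X i) 0› i)
  refine hasSmallInductiveDimensionLT_one_iff.2 <|
    (isTopologicalBasis_pi hbasis).of_isOpen_of_subset (fun _ hs ↦ hs.isOpen) ?_
  rintro _ ⟨U, F, hU, rfl⟩
  rw [mem_ofPred_eq, pi_def]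
  exact F.finite_toSet.isClopen_biInter fun i hi ↦ (hU i hi).preimage (continuous_apply i)

instance hasSmallInductiveDimensionLE_zero_of_discreteTopology {X : Type*} [TopologicalSpace X]
    [DiscreteTopology X] : HasSmallInductiveDimensionLE X 0 :=
  hasSmallInductiveDimensionLT_one_iff.2 <|
    (isTopologicalBasis_singletons X).of_isOpen_of_subset (fun _ hs ↦ hs.isOpen)
      fun s _ ↦ isClopen_discrete s

section

variable {X : Type*} [TopologicalSpace X]

theorem exists_isLocallyConstant_mem_of_isClopen {U : ℕ → Set X} (hU : ∀ n, IsClopen (U n))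
    (hcover : ∀ x, ∃ n, x ∈ U n) : ∃ f : X → ℕ, IsLocallyConstant f ∧ ∀ x, x ∈ U (f x) := by
  classical
  refine ⟨fun x ↦ Nat.find (hcover x), IsLocallyConstant.iff_isOpen_fiber.2 fun n ↦ ?_,
    fun x ↦ Nat.find_spec (hcover x)⟩
  rw [preimage_find_eq_disjointed]
  exact disjointedRec (fun _ i ht ↦ ht.sdiff (hU i).isClosed) (hU n).isOpen

theorem exists_isLocallyConstant_mem_of_isOpen [LindelofSpace X]
    [HasSmallInductiveDimensionLE X 0] {ι : Type*} {V : ι → Set X} (hV : ∀ i, IsOpen (V i))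
    (hcover : ∀ x, ∃ i, x ∈ V i) : ∃ f : X → ι, IsLocallyConstant f ∧ ∀ x, x ∈ V (f x) := by
  rcases isEmpty_or_nonempty X with _ | _
  · exact ⟨isEmptyElim, .of_discrete _, isEmptyElim⟩
  choose i hi using hcover
  have hbasis : IsTopologicalBasis {s : Set X | IsClopen s} :=
    hasSmallInductiveDimensionLT_one_iff.1 ‹HasSmallInductiveDimensionLE X 0›
  choose U hU hxU hUV using fun x ↦ hbasis.exists_subset_of_mem_open (hi x) (hV (i x))
  obtain ⟨s, hs⟩ := isLindelof_univ.indexed_countable_subcover U (fun x ↦ (hU x).isOpen)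
    fun x _ ↦ mem_iUnion.2 ⟨x, hxU x⟩
  obtain ⟨f, hf, hfU⟩ := exists_isLocallyConstant_mem_of_isClopen (fun n ↦ hU (s n))
    fun x ↦ mem_iUnion.1 (hs (mem_univ x))
  exact ⟨fun x ↦ i (s (f x)), hf.comp (i ∘ s), fun x ↦ hUV _ (hfU x)⟩

instance UltranormalSpace.of_lindelofSpace [LindelofSpace X]
    [HasSmallInductiveDimensionLE X 0] : UltranormalSpace X where
  exists_isClopen_of_disjoint A B hA hB hAB := by
    have hopen (b : Bool) : IsOpen (bif b then Bᶜ else Aᶜ) := by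
      cases b
      exacts [hA.isOpen_compl, hB.isOpen_compl]
    have hcover (x : X) : ∃ b : Bool, x ∈ bif b then Bᶜ else Aᶜ := by
      by_cases hx : x ∈ A
      exacts [⟨true, disjoint_left.1 hAB hx⟩, ⟨false, hx⟩]
    obtain ⟨f, hf, hfmem⟩ := exists_isLocallyConstant_mem_of_isOpen hopen hcover
    refine ⟨{x | f x = true}, hf.isClopen_fiber true, fun x hxA ↦ ?_, disjoint_left.2 fun x hx ↦ ?_⟩
    · by_contra hx
      have hxA' : x ∉ A := by simpa [Bool.eq_false_of_not_eq_true hx] using hfmem x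
      exact hxA' hxA
    · simpa [show f x = true from hx] using hfmem x

/-- The characteristic function of `S` is the pointwise limit of the characteristic functions of
a sequence of clopen sets. -/
def IsClopenLimit (S : Set X) : Prop :=
  ∃ E : ℕ → Set X, (∀ n, IsClopen (E n)) ∧ ∀ x, ∀ᶠ n in atTop, (x ∈ E n ↔ x ∈ S)

/-- The notion `ClopenGuessable` in an arbitrary topological space: membership in `S` can be
guessed in the limit from the answers to the questions `x ∈ C 0`, `x ∈ C 1`, …. -/
def IsClopenGuessable (S : Set X) : Prop :=
  ∃ C : ℕ → Set X, (∀ n, IsClopen (C n)) ∧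
    ∃ G : List ℕ → ℕ, ∀ x : X,
      (x ∈ S → ∀ᶠ n in atTop,
        G (List.ofFn fun i : Fin (n + 1) ↦ (C i).indicator (fun _ ↦ 1) x) = 1) ∧
      (x ∉ S → ∀ᶠ n in atTop,
        G (List.ofFn fun i : Fin (n + 1) ↦ (C i).indicator (fun _ ↦ 1) x) = 0)

variable {S : Set X}

theorem continuous_comp_ofFn_indicator {Y : Type*} [TopologicalSpace Y] {n : ℕ} {C : Fin n → Set X}
    (hC : ∀ i, IsClopen (C i)) (G : List ℕ → Y) :
    Continuous fun x ↦ G (List.ofFn fun i ↦ (C i).indicator (fun _ ↦ 1) x) := by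
  have hanswers : Continuous fun x i ↦ (C i).indicator (fun _ ↦ 1) x :=
    continuous_pi fun i ↦ (hC i).continuous_indicator continuous_const
  exact (continuous_of_discreteTopology (f := fun v : Fin n → ℕ ↦ G (List.ofFn v))).comp hanswers

theorem IsClopenGuessable.isClopenLimit (hS : IsClopenGuessable S) : IsClopenLimit S := by
  obtain ⟨C, hC, G, hG⟩ := hS
  refine ⟨fun n ↦ {x | G (List.ofFn fun i : Fin (n + 1) ↦ (C i).indicator (fun _ ↦ 1) x) = 1},
    fun n ↦ (isClopen_discrete {1}).preimage (continuous_comp_ofFn_indicator (fun i ↦ hC i) G),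
    fun x ↦ ?_⟩
  by_cases hx : x ∈ S
  · filter_upwards [(hG x).1 hx] with n hn
    simp only [hn, hx]
  · filter_upwards [(hG x).2 hx] with n hn
    simp only [hn, hx, zero_ne_one]

theorem IsClopenLimit.isClopenGuessable (hS : IsClopenLimit S) : IsClopenGuessable S := by
  obtain ⟨E, hE, hES⟩ := hS
  have hlast (x : X) (n : ℕ) :
      (List.ofFn fun i : Fin (n + 1) ↦ (E i).indicator (fun _ ↦ 1) x).getLastD 0 =
        (E n).indicator (fun _ ↦ 1) x := by
    rw [List.ofFn_succ_last, List.getLastD_concat, Fin.val_last]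
  refine ⟨E, hE, fun L ↦ L.getLastD 0, fun x ↦ ⟨fun hx ↦ ?_, fun hx ↦ ?_⟩⟩
  · filter_upwards [hES x] with n hn
    rw [hlast, indicator_of_mem (hn.2 hx)]
  · filter_upwards [hES x] with n hn
    rw [hlast, indicator_of_notMem (mt hn.1 hx)]

theorem isClopenGuessable_iff_isClopenLimit : IsClopenGuessable S ↔ IsClopenLimit S :=
  ⟨IsClopenGuessable.isClopenLimit, IsClopenLimit.isClopenGuessable⟩

theorem IsClopenLimit.compl (hS : IsClopenLimit S) : IsClopenLimit Sᶜ := by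
  obtain ⟨E, hE, hES⟩ := hS
  exact ⟨fun n ↦ (E n)ᶜ, fun n ↦ (hE n).compl, fun x ↦ (hES x).mono fun _ ↦ not_congr⟩

theorem IsClopenLimit.exists_eq_iUnion_isClosed (hS : IsClopenLimit S) :
    ∃ F : ℕ → Set X, (∀ n, IsClosed (F n)) ∧ S = ⋃ n, F n := by
  obtain ⟨E, hE, hES⟩ := hS
  refine ⟨fun N ↦ ⋂ n ≥ N, E n, fun N ↦ isClosed_biInter fun n _ ↦ (hE n).isClosed, ?_⟩
  ext x
  calc
    x ∈ S ↔ ∀ᶠ n in atTop, x ∈ E n := eventually_const.symm.trans (eventually_congr (hES x)).symm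
    _ ↔ x ∈ ⋃ N, ⋂ n ≥ N, E n := by simp only [eventually_atTop, mem_iUnion, mem_iInter]

theorem exists_compl_eq_iUnion_isClosed_iff :
    (∃ F : ℕ → Set X, (∀ n, IsClosed (F n)) ∧ Sᶜ = ⋃ n, F n) ↔
      ∃ U : ℕ → Set X, (∀ n, IsOpen (U n)) ∧ S = ⋂ n, U n := by
  constructor
  · rintro ⟨F, hF, hS⟩
    exact ⟨fun n ↦ (F n)ᶜ, fun n ↦ (hF n).isOpen_compl, by rw [← compl_iUnion, ← hS, compl_compl]⟩
  · rintro ⟨U, hU, rfl⟩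
    exact ⟨fun n ↦ (U n)ᶜ, fun n ↦ (hU n).isClosed_compl, compl_iInter U⟩

theorem isClosed_accumulate {ι : Type*} [Preorder ι] [LocallyFiniteOrderBot ι] {F : ι → Set X}
    (hF : ∀ n, IsClosed (F n)) (n : ι) : IsClosed (accumulate F n) :=
  (finite_Iic n).isClosed_biUnion fun i _ ↦ hF i

theorem eventually_mem_accumulate {ι α : Type*} [Preorder ι] {F : ι → Set α} {x : α}
    (hx : x ∈ ⋃ n, F n) : ∀ᶠ n in atTop, x ∈ accumulate F n := by
  obtain ⟨m, hm⟩ := mem_iUnion.1 hx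
  filter_upwards [eventually_ge_atTop m] with n hmn
  exact mem_accumulate.2 ⟨m, hmn, hm⟩

theorem isClopenLimit_of_iUnion_isClosed [UltranormalSpace X] {A B : ℕ → Set X}
    (hA : ∀ n, IsClosed (A n)) (hB : ∀ n, IsClosed (B n)) (hSA : S = ⋃ n, A n)
    (hSB : Sᶜ = ⋃ n, B n) : IsClopenLimit S := by
  have hdisj (n : ℕ) : Disjoint (accumulate A n) (accumulate B n) :=
    disjoint_compl_right.mono ((accumulate_subset_iUnion n).trans hSA.ge)
      ((accumulate_subset_iUnion n).trans hSB.ge)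
  choose E hE hAE hEB using fun n ↦ UltranormalSpace.exists_isClopen_of_disjoint
    (isClosed_accumulate hA n) (isClosed_accumulate hB n) (hdisj n)
  refine ⟨E, hE, fun x ↦ ?_⟩
  by_cases hx : x ∈ S
  · filter_upwards [eventually_mem_accumulate (hSA ▸ hx)] with n hn
    exact iff_of_true (hAE n hn) hx
  · filter_upwards [eventually_mem_accumulate (hSB ▸ mem_compl hx)] with n hn
    exact iff_of_false (disjoint_right.1 (hEB n) hn) hx

theorem clopenGuessable_iff_fsigma_and_gdelta_general [UltranormalSpace X] (S : Set X) :
    IsClopenGuessable S ↔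
      ((∃ F : ℕ → Set X, (∀ n, IsClosed (F n)) ∧ S = ⋃ n, F n) ∧
       (∃ U : ℕ → Set X, (∀ n, IsOpen (U n)) ∧ S = ⋂ n, U n)) := by
  rw [isClopenGuessable_iff_isClopenLimit, ← exists_compl_eq_iUnion_isClosed_iff]
  constructor
  · intro hS
    exact ⟨hS.exists_eq_iUnion_isClosed, hS.compl.exists_eq_iUnion_isClosed⟩
  · rintro ⟨⟨A, hA, hSA⟩, B, hB, hSB⟩
    exact isClopenLimit_of_iUnion_isClosed hA hB hSA hSB

end

/-- The clopen-guessable subsets of Baire space are exactly the sets that are both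
Fσ and Gδ, i.e. the Δ⁰₂ sets. -/
theorem clopenGuessable_iff_fsigma_and_gdelta (S : Set (ℕ → ℕ)) :
    ClopenGuessable S ↔
      ((∃ F : ℕ → Set (ℕ → ℕ), (∀ n, IsClosed (F n)) ∧ S = ⋃ n, F n) ∧
       (∃ U : ℕ → Set (ℕ → ℕ), (∀ n, IsOpen (U n)) ∧ S = ⋂ n, U n)) :=
  clopenGuessable_iff_fsigma_and_gdelta_general S
end

section
/- Let S be a subset of Baire space ℕ^ℕ. Then S is Δ⁰₂-guessable if and only if S is both a countable union of Gδ sets and a countable intersection of Fσ sets. (This is the m = 2 case of the paper's main theorem: the second-order guessable sets are exactly the Δ⁰₃ sets, where Δ⁰₂ sets are the sets that are both Fσ and Gδ, and Δ⁰₃ sets are the sets that are both Σ⁰₃, i.e. countable unions of Gδ sets, and Π⁰₃, i.e. countable intersections of Fσ sets.) -/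
/-- `A` is both Fσ (a countable union of closed sets) and Gδ (a countable
intersection of open sets). -/
def IsFsigmaGdelta (A : Set (ℕ → ℕ)) : Prop :=
  (∃ F : ℕ → Set (ℕ → ℕ), (∀ n, IsClosed (F n)) ∧ A = ⋃ n, F n) ∧
  (∃ U : ℕ → Set (ℕ → ℕ), (∀ n, IsOpen (U n)) ∧ A = ⋂ n, U n)

/-- `S` is Δ⁰₂-guessable: there are a sequence of sets `C n`, each both Fσ and Gδ,
and a guesser `G`, fed the characteristic values `χ_{C 0} f, …, χ_{C n} f`, whose
guesses are eventually `1` when `f ∈ S` and eventually `0` when `f ∉ S`. -/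
def Delta2Guessable (S : Set (ℕ → ℕ)) : Prop :=
  ∃ C : ℕ → Set (ℕ → ℕ), (∀ n, IsFsigmaGdelta (C n)) ∧
    ∃ G : List ℕ → ℕ, ∀ f : ℕ → ℕ,
      (f ∈ S → ∀ᶠ n in Filter.atTop,
        G (List.ofFn fun i : Fin (n + 1) => (C i).indicator (fun _ => 1) f) = 1) ∧
      (f ∉ S → ∀ᶠ n in Filter.atTop,
        G (List.ofFn fun i : Fin (n + 1) => (C i).indicator (fun _ => 1) f) = 0)

/-! A guesser fed the characteristic values of countably many sets from an algebra `𝒜` makes its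
`n`-th guess `1` on a set of `𝒜`, so `S` is guessable from `𝒜` exactly when it is a pointwise limit
of sets of `𝒜`; conversely a guesser may simply repeat the last value of such a sequence. A limit is
the lim inf of its sequence, hence a countable union of countable intersections, and so is its
complement. If, conversely, `S = ⋃ i, ⋂ j, U i j` and `Sᶜ = ⋃ i, ⋂ j, V i j`, let the two unions
compete: at stage `n` each `i` stands as long as no `j ≤ n` has refuted it, and the union whose
least standing index is smaller leads. When closed sets are Gδ, so that open sets are Δ⁰₂, the
countable unions of countable intersections of Δ⁰₂ sets are the countable unions of Gδ sets. -/

open Filter MeasureTheory Set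

section

variable {X : Type*} {𝒜 : Set (Set X)} {S : Set X} {x : X}

/-- The characteristic values `χ_{C 0} x, …, χ_{C (n - 1)} x`; note that there are `n` of them. -/
noncomputable def characteristicPrefix (C : ℕ → Set X) (x : X) (n : ℕ) : List ℕ :=
  List.ofFn fun i : Fin n => (C i).indicator (fun _ => 1) x

/-- Guessability of `S` from characteristic values of countably many sets of a family `𝒜`;
`Delta2Guessable` is the case of Baire space and the Δ⁰₂ sets. -/
def GuessableFrom (𝒜 : Set (Set X)) (S : Set X) : Prop :=
  ∃ C : ℕ → Set X, (∀ n, C n ∈ 𝒜) ∧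
    ∃ G : List ℕ → ℕ, ∀ x : X,
      (x ∈ S → ∀ᶠ n in atTop, G (characteristicPrefix C x (n + 1)) = 1) ∧
      (x ∉ S → ∀ᶠ n in atTop, G (characteristicPrefix C x (n + 1)) = 0)

/-- Pointwise convergence of the sets `A i` to `S` along a filter, i.e. convergence of their
characteristic functions to that of `S` in a discrete space. -/
def IsPointwiseLimit {ι : Type*} (l : Filter ι) (A : ι → Set X) (S : Set X) : Prop :=
  ∀ x, ∀ᶠ i in l, x ∈ A i ↔ x ∈ S

/-- Hausdorff's class `𝒜_{δσ}`: countable unions of countable intersections of sets of `𝒜`. -/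
def IsDeltaSigma (𝒜 : Set (Set X)) (S : Set X) : Prop :=
  ∃ U : ℕ → ℕ → Set X, (∀ i j, U i j ∈ 𝒜) ∧ S = ⋃ i, ⋂ j, U i j

section Guessing

theorem characteristicPrefix_succ (C : ℕ → Set X) (x : X) (n : ℕ) :
    characteristicPrefix C x (n + 1) =
      characteristicPrefix C x n ++ [(C n).indicator (fun _ => 1) x] :=
  List.ofFn_succ_last

theorem setOf_characteristicPrefix_mem (h𝒜 : IsSetAlgebra 𝒜) {C : ℕ → Set X}
    (hC : ∀ n, C n ∈ 𝒜) (n : ℕ) (P : List ℕ → Prop) :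
    {x | P (characteristicPrefix C x n)} ∈ 𝒜 := by
  induction n generalizing P with
  | zero =>
    by_cases hP : P []
    · simpa [characteristicPrefix, hP] using h𝒜.univ_mem
    · simpa [characteristicPrefix, hP] using h𝒜.empty_mem
  | succ n ih =>
    have split_on_last : {x | P (characteristicPrefix C x (n + 1))} =
        C n ∩ {x | P (characteristicPrefix C x n ++ [1])} ∪
          (C n)ᶜ ∩ {x | P (characteristicPrefix C x n ++ [0])} := by
      ext x
      by_cases hx : x ∈ C n <;> simp [characteristicPrefix_succ, hx]
    rw [split_on_last]
    exact h𝒜.union_mem (h𝒜.inter_mem (hC n) (ih fun l => P (l ++ [1])))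
      (h𝒜.inter_mem (h𝒜.compl_mem (hC n)) (ih fun l => P (l ++ [0])))

theorem GuessableFrom.exists_isPointwiseLimit (h𝒜 : IsSetAlgebra 𝒜) (hS : GuessableFrom 𝒜 S) :
    ∃ A : ℕ → Set X, (∀ n, A n ∈ 𝒜) ∧ IsPointwiseLimit atTop A S := by
  obtain ⟨C, hC, G, hG⟩ := hS
  refine ⟨fun n => {x | G (characteristicPrefix C x (n + 1)) = 1},
    fun n => setOf_characteristicPrefix_mem h𝒜 hC (n + 1) fun l => G l = 1, fun x => ?_⟩
  by_cases hx : x ∈ S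
  · filter_upwards [(hG x).1 hx] with n hn
    simp [hn, hx]
  · filter_upwards [(hG x).2 hx] with n hn
    simp [hn, hx]

theorem IsPointwiseLimit.guessableFrom {A : ℕ → Set X} (hA : ∀ n, A n ∈ 𝒜)
    (hlim : IsPointwiseLimit atTop A S) : GuessableFrom 𝒜 S := by
  refine ⟨A, hA, fun l => l.getLastD 0, fun x => ⟨fun hx => ?_, fun hx => ?_⟩⟩ <;>
  · filter_upwards [hlim x] with n hn
    simp [characteristicPrefix_succ, hn, hx]

end Guessing

section PointwiseLimit

variable {ι : Type*} {l : Filter ι} {A : ι → Set X}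

theorem IsPointwiseLimit.compl (hlim : IsPointwiseLimit l A S) :
    IsPointwiseLimit l (fun i => (A i)ᶜ) Sᶜ :=
  fun x => (hlim x).mono fun _ => not_congr

theorem IsPointwiseLimit.eq_liminf [l.NeBot] (hlim : IsPointwiseLimit l A S) :
    S = liminf A l := by
  ext x
  rw [mem_liminf_iff_eventually_mem, eventually_congr (hlim x), eventually_const]

theorem IsPointwiseLimit.isDeltaSigma {A : ℕ → Set X} (hA : ∀ n, A n ∈ 𝒜)
    (hlim : IsPointwiseLimit atTop A S) : IsDeltaSigma 𝒜 S :=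
  ⟨fun N n => A (n + N), fun _ _ => hA _, hlim.eq_liminf.trans liminf_eq_iSup_iInf_of_nat'⟩

end PointwiseLimit

section Competition

theorem dissipate_mem (h𝒜 : IsSetAlgebra 𝒜) {ι : Type*} [Preorder ι] [LocallyFiniteOrderBot ι]
    {s : ι → Set X} (hs : ∀ i, s i ∈ 𝒜) (n : ι) : dissipate s n ∈ 𝒜 := by
  simpa [dissipate_def] using h𝒜.biInter_mem (Finset.Iic n) fun i _ => hs i

theorem accumulate_mem (h𝒜 : IsSetAlgebra 𝒜) {ι : Type*} [Preorder ι] [LocallyFiniteOrderBot ι]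
    {s : ι → Set X} (hs : ∀ i, s i ∈ 𝒜) (n : ι) : accumulate s n ∈ 𝒜 := by
  simpa [accumulate_def] using h𝒜.biUnion_mem (Finset.Iic n) fun i _ => hs i

theorem eventually_notMem_dissipate {ι : Type*} [Preorder ι] {s : ι → Set X}
    (hx : x ∉ ⋂ i, s i) : ∀ᶠ n in atTop, x ∉ dissipate s n := by
  obtain ⟨i, hi⟩ : ∃ i, x ∉ s i := by simpa using hx
  filter_upwards [eventually_ge_atTop i] with n hin hn
  exact hi (dissipate_subset hin hn)

theorem eventually_notMem_accumulate_dissipate {ι κ : Type*} [Preorder ι]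
    [LocallyFiniteOrderBot ι] [Preorder κ] {V : ι → κ → Set X} (hx : x ∉ ⋃ i, ⋂ j, V i j) (m : ι) :
    ∀ᶠ n in atTop, x ∉ accumulate (fun i => dissipate (V i) n) m := by
  have eventually_refuted : ∀ i ∈ Iic m, ∀ᶠ n in atTop, x ∉ dissipate (V i) n :=
    fun i _ => eventually_notMem_dissipate fun hi => hx (mem_iUnion_of_mem i hi)
  filter_upwards [(eventually_all_finite (finite_Iic m)).2 eventually_refuted] with n hn
  simpa [mem_accumulate] using hn

/-- The points at which, of the competing unions `⋃ i, ⋂ j, U i j` and `⋃ i, ⋂ j, V i j`, the first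
leads at stage `n`: some `i ≤ n` has not been refuted for `U` by any `j ≤ n`, whereas every `k ≤ i`
has been refuted for `V`. -/
def leadingSet (U V : ℕ → ℕ → Set X) (n : ℕ) : Set X :=
  accumulate (fun i => dissipate (U i) n \ accumulate (fun k => dissipate (V k) n) i) n

variable {U V : ℕ → ℕ → Set X}

theorem leadingSet_mem (h𝒜 : IsSetAlgebra 𝒜) (hU : ∀ i j, U i j ∈ 𝒜) (hV : ∀ i j, V i j ∈ 𝒜)
    (n : ℕ) : leadingSet U V n ∈ 𝒜 :=
  accumulate_mem h𝒜 (fun i => h𝒜.sdiff_mem (dissipate_mem h𝒜 (hU i) n)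
    (accumulate_mem h𝒜 (fun k => dissipate_mem h𝒜 (hV k) n) i)) n

theorem eventually_mem_leadingSet (hU : x ∈ ⋃ i, ⋂ j, U i j) (hV : x ∉ ⋃ i, ⋂ j, V i j) :
    ∀ᶠ n in atTop, x ∈ leadingSet U V n := by
  obtain ⟨i, hi⟩ := mem_iUnion.1 hU
  filter_upwards [eventually_ge_atTop i, eventually_notMem_accumulate_dissipate hV i] with n hin hn
  exact mem_accumulate.2 ⟨i, hin, iInter_subset_dissipate n hi, hn⟩

theorem eventually_notMem_leadingSet (hU : x ∉ ⋃ i, ⋂ j, U i j) (hV : x ∈ ⋃ i, ⋂ j, V i j) :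
    ∀ᶠ n in atTop, x ∉ leadingSet U V n := by
  obtain ⟨k, hk⟩ := mem_iUnion.1 hV
  filter_upwards [eventually_notMem_accumulate_dissipate hU k] with n hn hlead
  obtain ⟨i, -, hUi, hVi⟩ := mem_accumulate.1 hlead
  rcases le_total i k with hik | hki
  · exact hn (mem_accumulate.2 ⟨i, hik, hUi⟩)
  · exact hVi (mem_accumulate.2 ⟨k, hki, iInter_subset_dissipate n hk⟩)

theorem isPointwiseLimit_leadingSet (hU : S = ⋃ i, ⋂ j, U i j) (hV : Sᶜ = ⋃ i, ⋂ j, V i j) :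
    IsPointwiseLimit atTop (leadingSet U V) S := by
  intro x
  by_cases hx : x ∈ S
  · have hxV : x ∉ ⋃ i, ⋂ j, V i j := hV ▸ notMem_compl_iff.2 hx
    filter_upwards [eventually_mem_leadingSet (hU ▸ hx) hxV] with n hn
    exact iff_of_true hn hx
  · have hxV : x ∈ ⋃ i, ⋂ j, V i j := hV ▸ mem_compl hx
    filter_upwards [eventually_notMem_leadingSet (hU ▸ hx) hxV] with n hn
    exact iff_of_false hn hx

end Competition

theorem guessableFrom_iff_isDeltaSigma (h𝒜 : IsSetAlgebra 𝒜) :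
    GuessableFrom 𝒜 S ↔ IsDeltaSigma 𝒜 S ∧ IsDeltaSigma 𝒜 Sᶜ := by
  constructor
  · intro hS
    obtain ⟨A, hA, hlim⟩ := hS.exists_isPointwiseLimit h𝒜
    exact ⟨hlim.isDeltaSigma hA, hlim.compl.isDeltaSigma fun n => h𝒜.compl_mem (hA n)⟩
  · rintro ⟨⟨U, hU, hSU⟩, V, hV, hSV⟩
    exact (isPointwiseLimit_leadingSet hSU hSV).guessableFrom (leadingSet_mem h𝒜 hU hV)

section Topology

variable [TopologicalSpace X]

/-- The Δ⁰₂ sets of a topological space, with Fσ expressed as having a Gδ complement. -/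
def IsDelta2 (A : Set X) : Prop :=
  IsGδ A ∧ IsGδ Aᶜ

theorem isSetAlgebra_setOf_isDelta2 : IsSetAlgebra {A : Set X | IsDelta2 A} where
  empty_mem := ⟨isOpen_empty.isGδ, isClosed_empty.isOpen_compl.isGδ⟩
  compl_mem _ hA := ⟨hA.2, by simpa only [compl_compl] using hA.1⟩
  union_mem A B hA hB := ⟨hA.1.union hB.1, (compl_union A B).symm ▸ hA.2.inter hB.2⟩

theorem isDeltaSigma_isOpen_iUnion {T : ℕ → Set X} (hT : ∀ i, IsGδ (T i)) :
    IsDeltaSigma {U | IsOpen U} (⋃ i, T i) := by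
  choose U hU hTU using fun i => (hT i).eq_iInter_nat
  exact ⟨U, hU, iUnion_congr hTU⟩

theorem isDeltaSigma_isDelta2_iff (hX : ∀ F : Set X, IsClosed F → IsGδ F) :
    IsDeltaSigma {A | IsDelta2 A} S ↔ IsDeltaSigma {U | IsOpen U} S := by
  constructor
  · rintro ⟨A, hA, rfl⟩
    exact isDeltaSigma_isOpen_iUnion fun i => .iInter fun j => (hA i j).1
  · rintro ⟨U, hU, rfl⟩
    exact ⟨U, fun i j => ⟨(hU i j).isGδ, hX _ (hU i j).isClosed_compl⟩, rfl⟩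

theorem isDeltaSigma_isOpen_compl_iff :
    IsDeltaSigma {U | IsOpen U} Sᶜ ↔
      ∃ F : ℕ → ℕ → Set X, (∀ i j, IsClosed (F i j)) ∧ S = ⋂ i, ⋃ j, F i j := by
  constructor
  · rintro ⟨U, hU, hSU⟩
    refine ⟨fun i j => (U i j)ᶜ, fun i j => (hU i j).isClosed_compl, ?_⟩
    simpa only [compl_compl, compl_iUnion, compl_iInter] using congrArg compl hSU
  · rintro ⟨F, hF, rfl⟩
    exact ⟨fun i j => (F i j)ᶜ, fun i j => (hF i j).isOpen_compl,
      by simp only [compl_iUnion, compl_iInter]⟩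

theorem delta2Guessable_iff_delta3_general (hX : ∀ F : Set X, IsClosed F → IsGδ F) (S : Set X) :
    GuessableFrom {A | IsDelta2 A} S ↔
      ((∃ U : ℕ → ℕ → Set X, (∀ i j, IsOpen (U i j)) ∧ S = ⋃ i, ⋂ j, U i j) ∧
       (∃ F : ℕ → ℕ → Set X, (∀ i j, IsClosed (F i j)) ∧ S = ⋂ i, ⋃ j, F i j)) := by
  rw [guessableFrom_iff_isDeltaSigma isSetAlgebra_setOf_isDelta2, isDeltaSigma_isDelta2_iff hX,
    isDeltaSigma_isDelta2_iff hX, isDeltaSigma_isOpen_compl_iff]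
  rfl

end Topology

end

theorem isFsigmaGdelta_iff_isDelta2 {A : Set (ℕ → ℕ)} : IsFsigmaGdelta A ↔ IsDelta2 A := by
  constructor
  · rintro ⟨⟨F, hF, hAF⟩, U, hU, hAU⟩
    refine ⟨hAU ▸ .iInter_of_isOpen hU, ?_⟩
    rw [hAF, compl_iUnion]
    exact .iInter_of_isOpen fun n => (hF n).isOpen_compl
  · rintro ⟨hA, hAc⟩
    obtain ⟨U, hU, hAU⟩ := hAc.eq_iInter_nat
    refine ⟨⟨fun n => (U n)ᶜ, fun n => (hU n).isClosed_compl, ?_⟩, hA.eq_iInter_nat⟩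
    rw [← compl_iInter, ← hAU, compl_compl]

theorem delta2Guessable_iff_guessableFrom {S : Set (ℕ → ℕ)} :
    Delta2Guessable S ↔ GuessableFrom {A | IsDelta2 A} S := by
  simp only [Delta2Guessable, isFsigmaGdelta_iff_isDelta2]
  rfl

/-- The Δ⁰₂-guessable subsets of Baire space are exactly the sets that are both a
countable union of Gδ sets and a countable intersection of Fσ sets, i.e. the Δ⁰₃ sets. -/
theorem delta2Guessable_iff_delta3 (S : Set (ℕ → ℕ)) :
    Delta2Guessable S ↔
      ((∃ U : ℕ → ℕ → Set (ℕ → ℕ), (∀ i j, IsOpen (U i j)) ∧ S = ⋃ i, ⋂ j, U i j) ∧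
       (∃ F : ℕ → ℕ → Set (ℕ → ℕ), (∀ i j, IsClosed (F i j)) ∧ S = ⋂ i, ⋃ j, F i j)) :=
  delta2Guessable_iff_guessableFrom.trans
    (delta2Guessable_iff_delta3_general (fun _ hF => hF.isGδ) S)
end
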